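/- arXiv:1412.7363 — 3 statements merged into one kernel-verified Lean document; each statement's English description precedes it below -/
import Mathlib

section
/- Let b, c be positive integers with q = gcd(b,c), let p > 1 be an integer, and let χ₁, χ₂ be non-principal primitive Dirichlet characters of moduli k₁ and k₂ respectively, satisfying (−1)^{p+1}·χ₁(−1)·χ₂(−1) = 1. Then (p+1)·( b·k₂·(c·k₁)^p·S̃_p(b,c:χ₁,χ₂) + c·k₁·(b·k₂)^p·S̃_p(c,b: χ̄₂, χ̄₁) ) = Σ_{j=0}^{p+1} C(p+1,j)·(b·k₂)^j·(c·k₁)^{p+1−j}·B_{j,χ̄₁}·B_{p+1−j,χ₂} + p·q^{p+1}·(k₁·k₂)^p·Σ_{h=1}^{k₁} Σ_{j=1}^{k₂} χ₁(h)·χ̄₂(j)·B̄_{p+1}( c·j/(q·k₂) + b·h/(q·k₁) ). -/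
open Finset

/-- The `n`-th Bernoulli polynomial evaluated at a real number. -/
noncomputable def BPoly (n : ℕ) (x : ℝ) : ℝ :=
  Polynomial.eval x ((Polynomial.bernoulli n).map (algebraMap ℚ ℝ))

open scoped Classical in
/-- The `n`-th Bernoulli function `B̄ₙ`. -/
noncomputable def BFun (n : ℕ) (x : ℝ) : ℝ :=
  if n = 1 then (if ∃ m : ℤ, x = (m : ℝ) then 0 else x - ⌊x⌋ - 1/2)
  else BPoly n (Int.fract x)

/-- The generalized Bernoulli function `B̄_{m,χ}` attached to a Dirichlet character. -/
noncomputable def BFunChar {k : ℕ} (χ : DirichletCharacter ℂ k) (m : ℕ) (x : ℝ) : ℂ :=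
  (k : ℂ) ^ ((m : ℤ) - 1) *
    ∑ n ∈ Finset.Icc 1 (k - 1), (starRingEnd ℂ) (χ (n : ZMod k)) * ((BFun m (((n : ℝ) + x) / k)) : ℂ)

/-- The generalized Bernoulli number `B_{m,χ} = B̄_{m,χ}(0)`. -/
noncomputable def BNumChar {k : ℕ} (χ : DirichletCharacter ℂ k) (m : ℕ) : ℂ := BFunChar χ m 0

/-- The complex conjugate of a Dirichlet character. -/
noncomputable def conjChar {k : ℕ} (χ : DirichletCharacter ℂ k) : DirichletCharacter ℂ k :=
  χ.ringHomComp (starRingEnd ℂ)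

/-- The character Dedekind sum `s_p(b,c : χ₁, χ₂)` for characters of the same modulus. -/
noncomputable def sChar {k : ℕ} (p b c : ℕ) (χ₁ χ₂ : DirichletCharacter ℂ k) : ℂ :=
  ∑ n ∈ Finset.range (c * k),
    χ₁ (n : ZMod k) * BFunChar χ₂ p (((b : ℝ) * n) / c) * ((BFun 1 ((n : ℝ) / (c * k))) : ℂ)

/-- The sum `S̃_p(b,c : χ₁, χ₂)` for characters of (possibly) different moduli. -/
noncomputable def StildeChar {k₁ k₂ : ℕ} (p b c : ℕ) (χ₁ : DirichletCharacter ℂ k₁)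
    (χ₂ : DirichletCharacter ℂ k₂) : ℂ :=
  ∑ n ∈ Finset.range (c * k₁),
    χ₁ (n : ZMod k₁) * BFunChar χ₂ p (((n : ℝ) * b * k₂) / (c * k₁)) *
      ((BFun 1 ((n : ℝ) / (c * k₁))) : ℂ)

section BernoulliAux

open PowerSeries in
/-- Exponential generating series of the Bernoulli polynomials at `x`. -/
noncomputable def bGen (x : ℝ) : PowerSeries ℝ :=
  PowerSeries.mk fun n => BPoly n x / (n.factorial : ℝ)

lemma bGen_mul (x : ℝ) : bGen x * (PowerSeries.exp ℝ - 1) =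
    PowerSeries.X * PowerSeries.rescale x (PowerSeries.exp ℝ) := by
  rw [← Polynomial.bernoulli_generating_function x]
  congr 1
  ext n
  simp [bGen, BPoly, Polynomial.aeval_def, Polynomial.eval_map, Algebra.smul_def, div_eq_inv_mul]

lemma exp_sub_one_ne : (PowerSeries.exp ℝ - 1) ≠ 0 := by
  intro h
  have := congrArg (PowerSeries.coeff 1) h
  simp [PowerSeries.coeff_exp, PowerSeries.coeff_one] at this

lemma exp_pow_sub_one_ne (c : ℕ) (hc : 0 < c) : (PowerSeries.exp ℝ ^ c - 1) ≠ 0 := by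
  intro h
  have := congrArg (PowerSeries.coeff 1) h
  rw [PowerSeries.exp_pow_eq_rescale_exp] at this
  simp [PowerSeries.coeff_exp, PowerSeries.coeff_one] at this
  omega

lemma deriv_rescale_exp (x : ℝ) :
    PowerSeries.derivative ℝ (PowerSeries.rescale x (PowerSeries.exp ℝ)) =
      PowerSeries.C x * PowerSeries.rescale x (PowerSeries.exp ℝ) := by
  ext n
  rw [PowerSeries.coeff_derivative]
  simp [PowerSeries.coeff_exp, Nat.factorial_succ]
  have : (n.factorial : ℝ) ≠ 0 := by positivity
  field_simp
  ring

lemma bGen_mul_bGen (x y : ℝ) : bGen x * bGen y =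
    (1 + PowerSeries.C (x + y - 1) * PowerSeries.X) * bGen (x + y)
      - PowerSeries.X * PowerSeries.derivative ℝ (bGen (x + y)) := by
  have hx := bGen_mul x
  have hy := bGen_mul y
  have hz := bGen_mul (x + y)
  have hd := congrArg (PowerSeries.derivative ℝ) hz
  rw [Derivation.leibniz, Derivation.leibniz, deriv_rescale_exp, map_sub,
    PowerSeries.derivative_exp, PowerSeries.derivative_X, Derivation.map_one_eq_zero] at hd
  simp only [smul_eq_mul] at hd
  have he := PowerSeries.exp_mul_exp_eq_exp_add (A := ℝ) x y
  have hC : PowerSeries.C (x + y - 1) = PowerSeries.C (x + y) - (1 : PowerSeries ℝ) := by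
    simp
  rw [hC]
  apply mul_right_cancel₀ exp_sub_one_ne
  apply mul_right_cancel₀ exp_sub_one_ne
  generalize PowerSeries.derivative ℝ (bGen (x + y)) = G' at *
  generalize PowerSeries.exp ℝ = E at *
  generalize bGen x = Gx at *
  generalize bGen y = Gy at *
  generalize bGen (x + y) = G at *
  generalize PowerSeries.C (x + y) = z at *
  generalize PowerSeries.rescale x E = Ex at *
  generalize PowerSeries.rescale y E = Ey at *
  generalize PowerSeries.rescale (x + y) E = Ez at *
  generalize (PowerSeries.X : PowerSeries ℝ) = t at *
  linear_combination Gy * (E - 1) * hx + t * Ex * hy - (1 + (z - 1) * t) * (E - 1) * hz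
    + t * (E - 1) * hd - t * E * hz + t ^ 2 * he

lemma bPoly_conv (p : ℕ) (x y : ℝ) :
    ∑ j ∈ range (p + 2), ((p + 1).choose j : ℝ) * BPoly j x * BPoly (p + 1 - j) y =
      ((p : ℝ) + 1) * (x + y - 1) * BPoly p (x + y) - p * BPoly (p + 1) (x + y) := by
  have h := congrArg (PowerSeries.coeff (p + 1)) (bGen_mul_bGen x y)
  rw [PowerSeries.coeff_mul, Finset.Nat.sum_antidiagonal_eq_sum_range_succ_mk] at h
  have h2 : ∑ j ∈ range (p + 2), ((p + 1).choose j : ℝ) * BPoly j x * BPoly (p + 1 - j) y =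
      ((p + 1).factorial : ℝ) * ∑ k ∈ range (p + 1).succ,
        (PowerSeries.coeff k) (bGen x) * (PowerSeries.coeff (p + 1 - k)) (bGen y) := by
    rw [Finset.mul_sum]
    apply Finset.sum_congr rfl
    intro j hj
    have hj' : j ≤ p + 1 := by simp at hj; omega
    rw [Nat.cast_choose ℝ hj']
    simp only [bGen, PowerSeries.coeff_mk]
    have : (j.factorial : ℝ) ≠ 0 := by positivity
    have : ((p + 1 - j).factorial : ℝ) ≠ 0 := by positivity
    field_simp
  rw [h2]
  rw [h, add_mul, one_mul, mul_assoc, map_sub, map_add, PowerSeries.coeff_C_mul,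
    PowerSeries.coeff_succ_X_mul, PowerSeries.coeff_succ_X_mul, PowerSeries.coeff_derivative]
  simp only [bGen, PowerSeries.coeff_mk]
  have : (p.factorial : ℝ) ≠ 0 := by positivity
  rw [Nat.factorial_succ]
  push_cast
  have : (p : ℝ) + 1 ≠ 0 := by positivity
  field_simp
  ring

lemma bPoly_mul (n c : ℕ) (hc : 0 < c) (x : ℝ) :
    (c : ℝ) ^ n * ∑ i ∈ range c, BPoly n (x + i / c) = c * BPoly n (c * x) := by
  have hc' : (c : ℝ) ≠ 0 := by positivity
  have key : ∑ i ∈ range c, PowerSeries.rescale (c : ℝ) (bGen (x + i / c)) =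
      PowerSeries.C (c : ℝ) * bGen (c * x) := by
    apply mul_right_cancel₀ exp_sub_one_ne
    apply mul_right_cancel₀ (exp_pow_sub_one_ne c hc)
    have h1 : ∀ i ∈ range c, PowerSeries.rescale (c : ℝ) (bGen (x + i / c)) *
        (PowerSeries.exp ℝ ^ c - 1) = PowerSeries.C (c : ℝ) * PowerSeries.X *
          PowerSeries.rescale (c * x) (PowerSeries.exp ℝ) * PowerSeries.exp ℝ ^ i := by
      intro i _
      have := congrArg (PowerSeries.rescale (c : ℝ)) (bGen_mul (x + i / c))
      rw [map_mul, map_sub, map_one, ← PowerSeries.exp_pow_eq_rescale_exp, map_mul,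
        PowerSeries.rescale_X, PowerSeries.rescale_rescale] at this
      rw [this, PowerSeries.exp_pow_eq_rescale_exp, mul_assoc _ _ (PowerSeries.rescale (i : ℝ) _),
        PowerSeries.exp_mul_exp_eq_exp_add]
      congr 3
      field_simp
    have h2 : (∑ i ∈ range c, PowerSeries.rescale (c : ℝ) (bGen (x + i / c))) *
        (PowerSeries.exp ℝ ^ c - 1) = PowerSeries.C (c : ℝ) * PowerSeries.X *
          PowerSeries.rescale (c * x) (PowerSeries.exp ℝ) *
            ∑ i ∈ range c, PowerSeries.exp ℝ ^ i := by
      rw [Finset.sum_mul, Finset.mul_sum]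
      exact Finset.sum_congr rfl h1
    have h3 := geom_sum_mul (PowerSeries.exp ℝ) c
    have h4 := bGen_mul (c * x)
    linear_combination (PowerSeries.exp ℝ - 1) * h2 + PowerSeries.C (c : ℝ) * PowerSeries.X *
          PowerSeries.rescale (c * x) (PowerSeries.exp ℝ) * h3
          - PowerSeries.C (c : ℝ) * (PowerSeries.exp ℝ ^ c - 1) * h4
  have h := congrArg (PowerSeries.coeff n) key
  rw [map_sum, PowerSeries.coeff_C_mul] at h
  simp only [PowerSeries.coeff_rescale, bGen, PowerSeries.coeff_mk] at h
  rw [← Finset.mul_sum, ← Finset.sum_div] at h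
  have : (n.factorial : ℝ) ≠ 0 := by positivity
  rw [← mul_div_assoc, ← mul_div_assoc, div_left_inj' this] at h
  exact h

lemma bPoly_add_one (n : ℕ) (x : ℝ) : BPoly n (x + 1) = BPoly n x + n * x ^ (n - 1) := by
  have h := congrArg (fun P => Polynomial.eval x (P.map (algebraMap ℚ ℝ)))
    (Polynomial.bernoulli_comp_one_add_X n)
  simp [Polynomial.map_comp] at h
  simp [BPoly, ← h, add_comm]

/-- The periodized Bernoulli polynomial. -/
noncomputable def DPer (n : ℕ) (x : ℝ) : ℝ := BPoly n (Int.fract x)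

lemma DPer_periodic (n : ℕ) : Function.Periodic (DPer n) 1 := by
  intro x
  simp [DPer]

lemma DPer_mul (n c : ℕ) (hc : 0 < c) (x : ℝ) :
    (c : ℝ) ^ n * ∑ i ∈ range c, DPer n (x + i / c) = c * DPer n (c * x) := by
  have hc' : (0 : ℝ) < c := by positivity
  have hper : Function.Periodic (fun x : ℝ => ∑ i ∈ range c, DPer n (x + i / c)) (1 / c) := by
    intro x
    obtain ⟨d, rfl⟩ : ∃ d, c = d + 1 := ⟨c - 1, by omega⟩
    simp only
    rw [Finset.sum_range_succ, Finset.sum_range_succ']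
    congr 1
    · apply Finset.sum_congr rfl
      intro i _
      congr 1
      push_cast
      ring
    · rw [← DPer_periodic n (x + _)]
      congr 1
      push_cast
      field_simp
      ring
  have hx : x = Int.fract (c * x) / c + (⌊c * x⌋ : ℤ) * (1 / c) := by
    rw [Int.fract]; field_simp; ring
  have h1 := (hper.int_mul ⌊c * x⌋) (Int.fract (c * x) / c)
  rw [← hx] at h1
  rw [h1]
  have h2 := bPoly_mul n c hc (Int.fract (c * x) / c)
  rw [mul_div_cancel₀ _ hc'.ne'] at h2
  rw [DPer, ← h2]
  congr 1
  apply Finset.sum_congr rfl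
  intro i hi
  have hi' : (i : ℝ) + 1 ≤ c := by exact_mod_cast Finset.mem_range.1 hi
  rw [DPer, Int.fract_eq_self.2]
  have := Int.fract_nonneg (c * x)
  have := Int.fract_lt_one (c * x)
  constructor
  · positivity
  · rw [← add_div, div_lt_one hc']; linarith

/-- The termwise identity. -/
lemma term_identity (p : ℕ) (hp : 1 < p) (x y : ℝ) (hx0 : 0 < x) (hx1 : x < 1) (hy0 : 0 < y)
    (hy1 : y < 1) :
    ((p : ℝ) + 1) * (DPer p (x + y) * ((x - 1 / 2) + (y - 1 / 2))) =
      ∑ j ∈ range (p + 2), ((p + 1).choose j : ℝ) * BPoly j x * BPoly (p + 1 - j) y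
        + p * DPer (p + 1) (x + y) := by
  rw [bPoly_conv]
  rcases lt_or_ge (x + y) 1 with h | h
  · rw [DPer, DPer, Int.fract_eq_self.2 ⟨by linarith, h⟩]
    ring
  · have hf : Int.fract (x + y) = x + y - 1 := by
      rw [Int.fract_eq_iff]
      exact ⟨by linarith, by linarith, 1, by simp⟩
    rw [DPer, DPer, hf]
    have e1 := bPoly_add_one p (x + y - 1)
    have e2 := bPoly_add_one (p + 1) (x + y - 1)
    rw [sub_add_cancel] at e1 e2
    rw [e1, e2]
    obtain ⟨r, rfl⟩ : ∃ r, p = r + 1 := ⟨p - 1, by omega⟩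
    simp only [Nat.add_sub_cancel]
    push_cast
    ring

end BernoulliAux

section SumAux

lemma sum_range_mul_split {M : Type*} [AddCommMonoid M] (f : ℕ → M) (c k : ℕ) :
    ∑ n ∈ range (c * k), f n = ∑ h ∈ range k, ∑ s ∈ range c, f (h + k * s) := by
  induction c with
  | zero => simp
  | succ c ih =>
    rw [Nat.succ_mul, Finset.sum_range_add, ih, ← Finset.sum_add_distrib]
    apply Finset.sum_congr rfl
    intro h _
    rw [Finset.sum_range_succ]
    congr 2
    ring

lemma sum_char_split (ψ g : ℕ → ℂ) (c k : ℕ) (hψ : ∀ h s, ψ (h + k * s) = ψ h) :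
    ∑ n ∈ range (c * k), ψ n * g n =
      ∑ h ∈ range k, ψ h * ∑ s ∈ range c, g (h + k * s) := by
  rw [sum_range_mul_split]
  apply Finset.sum_congr rfl
  intro h _
  rw [Finset.mul_sum]
  simp only [hψ]

lemma sum_perm (f : ℕ → ℝ) (b c : ℕ) (hc : 0 < c) (h : Nat.Coprime b c) :
    ∑ i ∈ range c, f (b * i % c) = ∑ i ∈ range c, f i := by
  have hm : Set.MapsTo (fun i => b * i % c) (range c : Set ℕ) (range c : Set ℕ) := by
    intro i _
    simpa using Nat.mod_lt _ hc
  have hi : Set.InjOn (fun i => b * i % c) (range c : Set ℕ) := by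
    intro i hi j hj hij
    have hi' : i < c := by simpa using hi
    have hj' : j < c := by simpa using hj
    have h1 : b * i ≡ b * j [MOD c] := hij
    have h2 : i ≡ j [MOD c] := Nat.ModEq.cancel_left_of_coprime (by rwa [Nat.gcd_comm]) h1
    exact Nat.ModEq.eq_of_lt_of_lt h2 hi' hj'
  refine Finset.sum_nbij (fun i => b * i % c) (fun i hi => ?_) hi ?_ (fun _ _ => rfl)
  · simpa using Nat.mod_lt _ hc
  · exact Finset.surjOn_of_injOn_of_card_le _ hm hi le_rfl

lemma DPer_add_nat (n m : ℕ) (x : ℝ) : DPer n (x + m) = DPer n x := by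
  simpa using (DPer_periodic n).nat_mul m x

lemma DPer_mod (n a c : ℕ) (hc : 0 < c) (x : ℝ) :
    DPer n (x + (a : ℝ) / c) = DPer n (x + ((a % c : ℕ) : ℝ) / c) := by
  have hc' : (c : ℝ) ≠ 0 := by positivity
  rw [← DPer_add_nat n (a / c) (x + ((a % c : ℕ) : ℝ) / c)]
  congr 1
  have : (a : ℝ) = ((a % c : ℕ) : ℝ) + c * ((a / c : ℕ) : ℝ) := by
    exact_mod_cast (Nat.mod_add_div a c).symm
  rw [this]
  field_simp
  ring

lemma DPer_mul' (p c : ℕ) (hc : 0 < c) (x : ℝ) :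
    (c : ℝ) ^ p * ∑ i ∈ range c, DPer (p + 1) (x + i / c) = DPer (p + 1) (c * x) := by
  have hc' : (c : ℝ) ≠ 0 := by positivity
  have := DPer_mul (p + 1) c hc x
  apply mul_left_cancel₀ hc'
  rw [← this]
  ring

lemma DPer_double (p q b c : ℕ) (hq : 0 < q) (hb : 0 < b) (hc : 0 < c) (h : Nat.Coprime b c)
    (x : ℝ) :
    (((q * b : ℕ) : ℝ) * ((q * c : ℕ) : ℝ)) ^ p * ∑ s ∈ range (q * c), ∑ t ∈ range (q * b),
      DPer (p + 1) (x + s / ((q * c : ℕ) : ℝ) + t / ((q * b : ℕ) : ℝ)) =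
      (q : ℝ) ^ (p + 1) * DPer (p + 1) (q * b * c * x) := by
  have hc' : (c : ℝ) ≠ 0 := by positivity
  have hq' : (q : ℝ) ≠ 0 := by positivity
  rw [mul_pow, mul_assoc, mul_left_comm, Finset.mul_sum]
  simp only [DPer_mul' p (q * b) (by positivity)]
  rw [sum_range_mul_split]
  have h1 : ∀ i ∈ range c, ∑ s ∈ range q, DPer (p + 1) (((q * b : ℕ) : ℝ) *
      (x + ((i + c * s : ℕ) : ℝ) / ((q * c : ℕ) : ℝ))) =
      q * DPer (p + 1) (q * b * x + ((b * i % c : ℕ) : ℝ) / c) := by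
    intro i _
    rw [← DPer_mod _ _ _ hc]
    rw [Finset.sum_congr rfl (g := fun _ => DPer (p + 1) (q * b * x + ((b * i : ℕ) : ℝ) / c))]
    · simp
    · intro s _
      rw [← DPer_add_nat _ (b * s) (q * b * x + ((b * i : ℕ) : ℝ) / c)]
      congr 1
      push_cast
      field_simp
      ring
  rw [Finset.sum_congr rfl h1, ← Finset.mul_sum,
    sum_perm (fun i => DPer (p + 1) (q * b * x + (i : ℝ) / c)) b c hc h]
  have h2 := DPer_mul' p c hc (q * b * x)
  rw [show (q : ℝ) * b * c * x = c * (q * b * x) by ring, ← h2]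
  push_cast
  ring

lemma DPer_double' (p q b c k₁ k₂ h j : ℕ) (hb : 0 < b) (hc : 0 < c) (hq : q = Nat.gcd b c)
    (hk₁ : 0 < k₁) (hk₂ : 0 < k₂) :
    ((b : ℝ) * c) ^ p * ∑ s ∈ range c, ∑ t ∈ range b,
      DPer (p + 1) (((h + k₁ * s : ℕ) : ℝ) / (c * k₁) + ((j + k₂ * t : ℕ) : ℝ) / (b * k₂)) =
      (q : ℝ) ^ (p + 1) * DPer (p + 1) ((c : ℝ) * j / (q * k₂) + (b : ℝ) * h / (q * k₁)) := by
  have hq0 : 0 < q := hq ▸ Nat.gcd_pos_of_pos_left _ hb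
  obtain ⟨b', hb'⟩ : q ∣ b := hq ▸ Nat.gcd_dvd_left b c
  obtain ⟨c', hc'⟩ : q ∣ c := hq ▸ Nat.gcd_dvd_right b c
  have hcop : Nat.Coprime b' c' := by
    rw [hb', hc', Nat.gcd_mul_left] at hq
    exact Nat.eq_of_mul_eq_mul_left hq0 (by omega)
  clear hq
  subst hb' hc'
  have hb0 : 0 < b' := Nat.pos_of_mul_pos_left hb
  have hc0 : 0 < c' := Nat.pos_of_mul_pos_left hc
  have := DPer_double p q b' c' hq0 hb0 hc0 hcop
    ((h : ℝ) / (q * c' * k₁) + (j : ℝ) / (q * b' * k₂))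
  have e : ∀ s t : ℕ, ((h + k₁ * s : ℕ) : ℝ) / (((q * c' : ℕ) : ℝ) * k₁) +
      ((j + k₂ * t : ℕ) : ℝ) / (((q * b' : ℕ) : ℝ) * k₂) =
      (h : ℝ) / (q * c' * k₁) + (j : ℝ) / (q * b' * k₂) + s / ((q * c' : ℕ) : ℝ)
        + t / ((q * b' : ℕ) : ℝ) := by
    intro s t
    push_cast
    field_simp
    ring
  simp only [e]
  rw [this]
  congr 2
  push_cast
  field_simp
  ring

end SumAux

section CharAux

lemma char_modulus {k : ℕ} [NeZero k] (χ : DirichletCharacter ℂ k) (h : χ ≠ 1) : 1 < k := by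
  have h0 : k ≠ 0 := NeZero.ne k
  rcases Nat.lt_or_ge 1 k with h1 | h1
  · exact h1
  · have : k = 1 := by omega
    subst this
    exact absurd (DirichletCharacter.level_one χ) h

lemma char_zero {k : ℕ} [NeZero k] (χ : DirichletCharacter ℂ k) (h : χ ≠ 1) : χ 0 = 0 := by
  have : Fact (1 < k) := ⟨char_modulus χ h⟩
  exact MulChar.map_nonunit χ not_isUnit_zero

lemma BFun_ne_one (n : ℕ) (hn : n ≠ 1) (x : ℝ) : BFun n x = DPer n x := by
  simp [BFun, DPer, hn]

lemma not_int_of_mem (x : ℝ) (h0 : 0 < x) (h1 : x < 1) : ¬ ∃ m : ℤ, x = (m : ℝ) := by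
  rintro ⟨m, rfl⟩
  have a : 0 < m := by exact_mod_cast h0
  have b : m < 1 := by exact_mod_cast h1
  omega

lemma BFun_one_of_mem (x : ℝ) (h0 : 0 < x) (h1 : x < 1) : BFun 1 x = x - 1 / 2 := by
  have : ⌊x⌋ = 0 := Int.floor_eq_zero_iff.2 ⟨h0.le, h1⟩
  simp [BFun, not_int_of_mem x h0 h1, this]

lemma BFun_of_mem (n : ℕ) (x : ℝ) (h0 : 0 < x) (h1 : x < 1) : BFun n x = BPoly n x := by
  by_cases hn : n = 1
  · subst hn
    rw [BFun_one_of_mem x h0 h1]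
    simp [BPoly]
  · rw [BFun_ne_one n hn, DPer, Int.fract_eq_self.2 ⟨h0.le, h1⟩]

lemma BFunChar_eq {k : ℕ} [NeZero k] (χ : DirichletCharacter ℂ k) (h : χ ≠ 1) (m : ℕ) (x : ℝ) :
    (k : ℂ) * BFunChar χ m x = (k : ℂ) ^ m *
      ∑ n ∈ range k, (starRingEnd ℂ) (χ (n : ZMod k)) * ((BFun m (((n : ℝ) + x) / k)) : ℂ) := by
  have hk : (k : ℂ) ≠ 0 := by exact_mod_cast NeZero.ne k
  have hk1 := char_modulus χ h
  rw [BFunChar, ← mul_assoc, zpow_sub₀ hk, zpow_one, zpow_natCast, mul_div_cancel₀ _ hk]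
  congr 1
  apply Finset.sum_subset
  · intro n hn
    simp at hn ⊢
    omega
  · intro n hn hn'
    have : n = 0 := by
      simp at hn hn'
      omega
    subst this
    simp [char_zero χ h]

lemma conj_char_period {k : ℕ} (χ : DirichletCharacter ℂ k) (h s : ℕ) :
    (starRingEnd ℂ) (χ ((h + k * s : ℕ) : ZMod k)) = (starRingEnd ℂ) (χ (h : ZMod k)) := by
  simp

lemma BNumChar_eq {k : ℕ} [NeZero k] (χ : DirichletCharacter ℂ k) (h : χ ≠ 1) (c : ℕ)
    (hc : 0 < c) (j : ℕ) :
    ((c : ℂ) * k) * BNumChar χ j = ((c : ℂ) * k) ^ j *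
      ∑ n ∈ range (c * k), (starRingEnd ℂ) (χ (n : ZMod k)) *
        ((BPoly j ((n : ℝ) / (c * k)) : ℝ) : ℂ) := by
  have hk : 0 < k := NeZero.pos k
  have hk' : (k : ℝ) ≠ 0 := by positivity
  have hc' : (c : ℝ) ≠ 0 := by positivity
  rw [sum_char_split _ _ c k (conj_char_period χ), mul_assoc, BNumChar, BFunChar_eq χ h, mul_pow,
    mul_comm ((c : ℂ) ^ j), mul_left_comm, mul_assoc]
  congr 1
  rw [Finset.mul_sum, Finset.mul_sum]
  apply Finset.sum_congr rfl
  intro n hn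
  have hn' : n < k := Finset.mem_range.1 hn
  rcases Nat.eq_zero_or_pos n with h0 | h0
  · subst h0
    simp [char_zero χ h]
  · have e := bPoly_mul j c hc ((n : ℝ) / (c * k))
    rw [BFun_of_mem]
    · have e2 : ((n : ℝ) + 0) / k = c * ((n : ℝ) / (c * k)) := by field_simp; ring
      rw [e2, mul_left_comm, mul_left_comm ((c : ℂ) ^ j)]
      congr 1
      have e3 : ∀ s : ℕ, ((n + k * s : ℕ) : ℝ) / (c * k) = (n : ℝ) / (c * k) + s / c := by
        intro s
        push_cast
        field_simp
      simp only [e3]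
      exact_mod_cast e.symm
    · have : (0 : ℝ) < k := by positivity
      have : (0 : ℝ) < n := by positivity
      positivity
    · have : (0 : ℝ) < k := by positivity
      rw [div_lt_one this, add_zero]
      exact_mod_cast hn'

lemma BFunChar_DPer {k : ℕ} [NeZero k] (χ : DirichletCharacter ℂ k) (h : χ ≠ 1) (b : ℕ)
    (hb : 0 < b) (p : ℕ) (hp : p ≠ 1) (x y : ℝ) (hy : y = b * k * x) :
    ((b : ℂ) * k) * BFunChar χ p y = ((b : ℂ) * k) ^ p *
      ∑ n ∈ range (b * k), (starRingEnd ℂ) (χ (n : ZMod k)) *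
        ((DPer p (x + (n : ℝ) / (b * k)) : ℝ) : ℂ) := by
  have hk : 0 < k := NeZero.pos k
  have hk' : (k : ℝ) ≠ 0 := by positivity
  have hb' : (b : ℝ) ≠ 0 := by positivity
  rw [sum_char_split _ _ b k (conj_char_period χ), mul_assoc, BFunChar_eq χ h, mul_pow,
    mul_comm ((b : ℂ) ^ p), mul_left_comm, mul_assoc]
  congr 1
  rw [Finset.mul_sum, Finset.mul_sum]
  apply Finset.sum_congr rfl
  intro n hn
  have e := DPer_mul p b hb (x + (n : ℝ) / (b * k))
  rw [BFun_ne_one p hp]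
  have e2 : ((n : ℝ) + y) / k = b * (x + (n : ℝ) / (b * k)) := by
    subst hy
    field_simp
    ring
  rw [e2, mul_left_comm, mul_left_comm ((b : ℂ) ^ p)]
  congr 1
  have e3 : ∀ s : ℕ, x + ((n + k * s : ℕ) : ℝ) / (b * k) = x + (n : ℝ) / (b * k) + s / b := by
    intro s
    push_cast
    field_simp
    ring
  simp only [e3]
  exact_mod_cast e.symm

lemma StildeChar_eq {k₁ k₂ : ℕ} [NeZero k₁] [NeZero k₂] (p b c : ℕ) (hb : 0 < b) (hc : 0 < c)
    (hp : p ≠ 1) (χ₁ : DirichletCharacter ℂ k₁) (χ₂ : DirichletCharacter ℂ k₂) (h₁ : χ₁ ≠ 1)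
    (h₂ : χ₂ ≠ 1) :
    ((b : ℂ) * k₂) * StildeChar p b c χ₁ χ₂ = ((b : ℂ) * k₂) ^ p *
      ∑ n ∈ range (c * k₁), ∑ m ∈ range (b * k₂),
        χ₁ (n : ZMod k₁) * (starRingEnd ℂ) (χ₂ (m : ZMod k₂)) *
        ((DPer p ((n : ℝ) / (c * k₁) + (m : ℝ) / (b * k₂)) *
          ((n : ℝ) / (c * k₁) - 1 / 2) : ℝ) : ℂ) := by
  have hk₁ : 0 < k₁ := NeZero.pos k₁
  rw [StildeChar, Finset.mul_sum, Finset.mul_sum]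
  apply Finset.sum_congr rfl
  intro n hn
  rcases Nat.eq_zero_or_pos n with h0 | h0
  · subst h0
    simp [char_zero χ₁ h₁]
  have hN : (0 : ℝ) < c * k₁ := by positivity
  rw [BFun_one_of_mem]
  · have e := BFunChar_DPer χ₂ h₂ b hb p hp ((n : ℝ) / (c * k₁))
      (((n : ℝ) * b * k₂) / (c * k₁)) (by field_simp)
    rw [show ∀ A B C D : ℂ, A * (B * C * D) = B * D * (A * C) by intros; ring, e, mul_left_comm,
      Finset.mul_sum]
    congr 1
    apply Finset.sum_congr rfl
    intro m _
    push_cast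
    ring
  · positivity
  · rw [div_lt_one hN]
    exact_mod_cast Finset.mem_range.1 hn

lemma conjChar_ne_one {k : ℕ} (χ : DirichletCharacter ℂ k) (h : χ ≠ 1) : conjChar χ ≠ 1 := by
  intro h'
  apply h
  ext a
  have := congrArg (fun ψ : DirichletCharacter ℂ k => (starRingEnd ℂ) (ψ a)) h'
  simpa [conjChar, MulChar.ringHomComp_apply] using this

lemma third_sum {k₁ k₂ : ℕ} [NeZero k₁] [NeZero k₂] (p b c q : ℕ) (hb : 0 < b) (hc : 0 < c)
    (hq : q = Nat.gcd b c) (χ₁ : DirichletCharacter ℂ k₁) (χ₂ : DirichletCharacter ℂ k₂)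
    (h₁ : χ₁ ≠ 1) (h₂ : χ₂ ≠ 1) :
    (((c : ℂ) * k₁) * ((b : ℂ) * k₂)) ^ p *
      ∑ n ∈ range (c * k₁), ∑ m ∈ range (b * k₂),
        χ₁ (n : ZMod k₁) * (starRingEnd ℂ) (χ₂ (m : ZMod k₂)) *
        ((DPer (p + 1) ((n : ℝ) / (c * k₁) + (m : ℝ) / (b * k₂)) : ℝ) : ℂ) =
      (q : ℂ) ^ (p + 1) * ((k₁ : ℂ) * k₂) ^ p *
          ∑ h ∈ Finset.Icc 1 k₁, ∑ j ∈ Finset.Icc 1 k₂,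
            χ₁ (h : ZMod k₁) * (starRingEnd ℂ) (χ₂ (j : ZMod k₂)) *
              ((DPer (p + 1) ((c : ℝ) * j / (q * k₂) + (b : ℝ) * h / (q * k₁)) : ℝ) : ℂ) := by
  have icc : ∀ (k : ℕ) (f : ℕ → ℂ), f 0 = 0 → f k = 0 →
      ∑ i ∈ Finset.Icc 1 k, f i = ∑ i ∈ range k, f i := by
    intro k f h0 hk
    have e1 := Finset.sum_range_succ f k
    have e2 := Finset.sum_range_succ' f k
    have e3 : ∑ i ∈ Finset.Icc 1 k, f i = ∑ i ∈ range k, f (i + 1) := by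
      rw [Finset.range_eq_Ico, Finset.sum_Ico_add' f 0 k 1]
      congr 1
    rw [e3]
    rw [h0, add_zero] at e2
    rw [hk, add_zero] at e1
    rw [← e2, e1]
  have z₁ := char_zero χ₁ h₁
  have z₂ := char_zero χ₂ h₂
  rw [icc k₁ _ (by simp [z₁]) (by simp [z₁])]
  have icc2 : ∀ h ∈ range k₁, ∑ j ∈ Finset.Icc 1 k₂,
            χ₁ (h : ZMod k₁) * (starRingEnd ℂ) (χ₂ (j : ZMod k₂)) *
              ((DPer (p + 1) ((c : ℝ) * j / (q * k₂) + (b : ℝ) * h / (q * k₁)) : ℝ) : ℂ) =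
          ∑ j ∈ range k₂, χ₁ (h : ZMod k₁) * (starRingEnd ℂ) (χ₂ (j : ZMod k₂)) *
              ((DPer (p + 1) ((c : ℝ) * j / (q * k₂) + (b : ℝ) * h / (q * k₁)) : ℝ) : ℂ) := by
    intro h _
    rw [icc k₂ _ (by simp [z₂]) (by simp [z₂])]
  rw [Finset.sum_congr rfl icc2, sum_range_mul_split, Finset.mul_sum, Finset.mul_sum]
  apply Finset.sum_congr rfl
  intro h _
  simp only [sum_range_mul_split _ b k₂]
  rw [Finset.sum_comm, Finset.mul_sum, Finset.mul_sum]
  apply Finset.sum_congr rfl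
  intro j _
  have e := DPer_double' p q b c k₁ k₂ h j hb hc hq (NeZero.pos k₁) (NeZero.pos k₂)
  have e' := congrArg (fun r : ℝ => (r : ℂ)) e
  simp only [Complex.ofReal_mul, Complex.ofReal_pow, Complex.ofReal_sum,
    Complex.ofReal_natCast] at e'
  have r : ∑ s ∈ range c, ∑ t ∈ range b, χ₁ ((h + k₁ * s : ℕ) : ZMod k₁) *
      (starRingEnd ℂ) (χ₂ ((j + k₂ * t : ℕ) : ZMod k₂)) *
      ((DPer (p + 1) (((h + k₁ * s : ℕ) : ℝ) / (c * k₁) +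
        ((j + k₂ * t : ℕ) : ℝ) / (b * k₂)) : ℝ) : ℂ) =
      χ₁ (h : ZMod k₁) * (starRingEnd ℂ) (χ₂ (j : ZMod k₂)) * ∑ s ∈ range c, ∑ t ∈ range b,
      ((DPer (p + 1) (((h + k₁ * s : ℕ) : ℝ) / (c * k₁) +
        ((j + k₂ * t : ℕ) : ℝ) / (b * k₂)) : ℝ) : ℂ) := by
    simp only [Finset.mul_sum]
    apply Finset.sum_congr rfl
    intro s _
    apply Finset.sum_congr rfl
    intro t _
    congr 2
    · simp
    · simp
  rw [r]
  rw [show (((c : ℂ) * k₁) * ((b : ℂ) * k₂)) ^ p = ((k₁ : ℂ) * k₂) ^ p * ((b : ℂ) * c) ^ p by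
    rw [← mul_pow]; ring]
  linear_combination ((k₁ : ℂ) * k₂) ^ p * χ₁ (h : ZMod k₁) *
    (starRingEnd ℂ) (χ₂ (j : ZMod k₂)) * e'

end CharAux

/-- Reciprocity formula for the sums `S̃_p` attached to two primitive characters of
moduli `k₁` and `k₂` (Theorem 1.2). -/
theorem reciprocity_StildeChar (b c : ℕ) (hb : 0 < b) (hc : 0 < c) (q : ℕ)
    (hq : q = Nat.gcd b c) (p : ℕ) (hp : 1 < p) (k₁ k₂ : ℕ) [NeZero k₁] [NeZero k₂]
    (χ₁ : DirichletCharacter ℂ k₁) (χ₂ : DirichletCharacter ℂ k₂)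
    (h₁ : χ₁ ≠ 1) (h₂ : χ₂ ≠ 1) (hprim₁ : χ₁.IsPrimitive) (hprim₂ : χ₂.IsPrimitive)
    (hpar : (-1 : ℂ) ^ (p + 1) * χ₁ (-1) * χ₂ (-1) = 1) :
    ((p : ℂ) + 1) * ((b : ℂ) * (k₂ : ℂ) * ((c : ℂ) * k₁) ^ p * StildeChar p b c χ₁ χ₂
        + (c : ℂ) * (k₁ : ℂ) * ((b : ℂ) * k₂) ^ p * StildeChar p c b (conjChar χ₂) (conjChar χ₁)) =
      (∑ j ∈ Finset.range (p + 2), (Nat.choose (p + 1) j : ℂ) * ((b : ℂ) * k₂) ^ j *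
          ((c : ℂ) * k₁) ^ (p + 1 - j) * BNumChar (conjChar χ₁) j * BNumChar χ₂ (p + 1 - j))
      + (p : ℂ) * (q : ℂ) ^ (p + 1) * ((k₁ : ℂ) * k₂) ^ p *
          ∑ h ∈ Finset.Icc 1 k₁, ∑ j ∈ Finset.Icc 1 k₂,
            χ₁ (h : ZMod k₁) * (starRingEnd ℂ) (χ₂ (j : ZMod k₂)) *
              ((BFun (p + 1) ((c : ℝ) * j / (q * k₂) + (b : ℝ) * h / (q * k₁))) : ℂ) := by
  have hk₁ : 0 < k₁ := NeZero.pos k₁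
  have hk₂ : 0 < k₂ := NeZero.pos k₂
  have hp1 : p ≠ 1 := by omega
  have hc1 := conjChar_ne_one χ₁ h₁
  have hc2 := conjChar_ne_one χ₂ h₂
  have hcc : ∀ a, (starRingEnd ℂ) (conjChar χ₁ a) = χ₁ a := by
    intro a
    simp [conjChar, MulChar.ringHomComp_apply]
  have hcc2 : ∀ a, conjChar χ₂ a = (starRingEnd ℂ) (χ₂ a) := by
    intro a
    simp [conjChar, MulChar.ringHomComp_apply]
  have hS1 := StildeChar_eq p b c hb hc hp1 χ₁ χ₂ h₁ h₂
  have hS2 := StildeChar_eq p c b hc hb hp1 (conjChar χ₂) (conjChar χ₁) hc2 hc1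
  simp only [hcc, hcc2] at hS2
  rw [Finset.sum_comm] at hS2
  have hT := third_sum p b c q hb hc hq χ₁ χ₂ h₁ h₂
  have hN0 : ((c : ℂ) * k₁) ≠ 0 := by
    exact_mod_cast (Nat.mul_pos hc hk₁).ne'
  have hM0 : ((b : ℂ) * k₂) ≠ 0 := by
    exact_mod_cast (Nat.mul_pos hb hk₂).ne'
  have hB : (∑ j ∈ Finset.range (p + 2), (Nat.choose (p + 1) j : ℂ) * ((b : ℂ) * k₂) ^ j *
          ((c : ℂ) * k₁) ^ (p + 1 - j) * BNumChar (conjChar χ₁) j * BNumChar χ₂ (p + 1 - j)) =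
      (((c : ℂ) * k₁) * ((b : ℂ) * k₂)) ^ p *
      ∑ n ∈ range (c * k₁), ∑ m ∈ range (b * k₂),
        χ₁ (n : ZMod k₁) * (starRingEnd ℂ) (χ₂ (m : ZMod k₂)) *
        ((∑ j ∈ range (p + 2), ((p + 1).choose j : ℝ) * BPoly j ((n : ℝ) / (c * k₁)) *
          BPoly (p + 1 - j) ((m : ℝ) / (b * k₂)) : ℝ) : ℂ) := by
    apply mul_left_cancel₀ (mul_ne_zero hN0 hM0)
    have e1 : ∀ j ∈ range (p + 2), (((c : ℂ) * k₁) * ((b : ℂ) * k₂)) *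
        ((Nat.choose (p + 1) j : ℂ) * ((b : ℂ) * k₂) ^ j *
          ((c : ℂ) * k₁) ^ (p + 1 - j) * BNumChar (conjChar χ₁) j * BNumChar χ₂ (p + 1 - j)) =
        (((c : ℂ) * k₁) * ((b : ℂ) * k₂)) ^ (p + 1) *
        ∑ n ∈ range (c * k₁), ∑ m ∈ range (b * k₂),
        χ₁ (n : ZMod k₁) * (starRingEnd ℂ) (χ₂ (m : ZMod k₂)) *
        (((p + 1).choose j : ℂ) * (BPoly j ((n : ℝ) / (c * k₁)) : ℂ) *
          (BPoly (p + 1 - j) ((m : ℝ) / (b * k₂)) : ℂ)) := by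
      intro j hj
      have a1 := BNumChar_eq (conjChar χ₁) hc1 c hc j
      have a2 := BNumChar_eq χ₂ h₂ b hb (p + 1 - j)
      simp only [hcc] at a1
      obtain ⟨i, hi⟩ : ∃ i, p + 1 = j + i := ⟨p + 1 - j, by simp at hj; omega⟩
      have hi' : p + 1 - j = i := by omega
      rw [hi'] at a2 ⊢
      have hprod : ∑ n ∈ range (c * k₁), ∑ m ∈ range (b * k₂),
          χ₁ (n : ZMod k₁) * (starRingEnd ℂ) (χ₂ (m : ZMod k₂)) *
          (((p + 1).choose j : ℂ) * (BPoly j ((n : ℝ) / (c * k₁)) : ℂ) *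
            (BPoly i ((m : ℝ) / (b * k₂)) : ℂ)) =
          ((p + 1).choose j : ℂ) *
          ((∑ n ∈ range (c * k₁), χ₁ (n : ZMod k₁) * (BPoly j ((n : ℝ) / (c * k₁)) : ℂ)) *
          (∑ m ∈ range (b * k₂), (starRingEnd ℂ) (χ₂ (m : ZMod k₂)) *
            (BPoly i ((m : ℝ) / (b * k₂)) : ℂ))) := by
        rw [Finset.sum_mul_sum, Finset.mul_sum]
        apply Finset.sum_congr rfl
        intro n _
        rw [Finset.mul_sum]
        apply Finset.sum_congr rfl
        intro m _
        ring
      rw [hprod, hi, mul_pow ((c : ℂ) * k₁), pow_add ((c : ℂ) * k₁), pow_add ((b : ℂ) * k₂)]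
      generalize (c : ℂ) * k₁ = N at *
      generalize (b : ℂ) * k₂ = M at *
      generalize ((j + i).choose j : ℂ) = C at *
      linear_combination C * M ^ j * N ^ i * (M * BNumChar χ₂ i) * a1 +
        C * M ^ j * N ^ i * (N ^ j * ∑ n ∈ range (c * k₁), χ₁ (n : ZMod k₁) *
          (BPoly j ((n : ℝ) / (c * k₁)) : ℂ)) * a2
    rw [Finset.mul_sum, Finset.sum_congr rfl e1, ← Finset.mul_sum,
      pow_succ' (((c : ℂ) * k₁) * ((b : ℂ) * k₂)), mul_assoc (((c : ℂ) * k₁) * ((b : ℂ) * k₂))]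
    congr 1
    congr 1
    rw [Finset.sum_comm]
    apply Finset.sum_congr rfl
    intro n _
    rw [Finset.sum_comm]
    apply Finset.sum_congr rfl
    intro m _
    rw [← Finset.mul_sum]
    push_cast
    rfl
  have hfin : ((p : ℂ) + 1) * ((∑ n ∈ range (c * k₁), ∑ m ∈ range (b * k₂),
        χ₁ (n : ZMod k₁) * (starRingEnd ℂ) (χ₂ (m : ZMod k₂)) *
        ((DPer p ((n : ℝ) / (c * k₁) + (m : ℝ) / (b * k₂)) *
          ((n : ℝ) / (c * k₁) - 1 / 2) : ℝ) : ℂ)) +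
        ∑ n ∈ range (c * k₁), ∑ m ∈ range (b * k₂),
        (starRingEnd ℂ) (χ₂ (m : ZMod k₂)) * χ₁ (n : ZMod k₁) *
        ((DPer p ((m : ℝ) / (b * k₂) + (n : ℝ) / (c * k₁)) *
          ((m : ℝ) / (b * k₂) - 1 / 2) : ℝ) : ℂ)) =
      (∑ n ∈ range (c * k₁), ∑ m ∈ range (b * k₂),
        χ₁ (n : ZMod k₁) * (starRingEnd ℂ) (χ₂ (m : ZMod k₂)) *
        ((∑ j ∈ range (p + 2), ((p + 1).choose j : ℝ) * BPoly j ((n : ℝ) / (c * k₁)) *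
          BPoly (p + 1 - j) ((m : ℝ) / (b * k₂)) : ℝ) : ℂ)) +
      p * ∑ n ∈ range (c * k₁), ∑ m ∈ range (b * k₂),
        χ₁ (n : ZMod k₁) * (starRingEnd ℂ) (χ₂ (m : ZMod k₂)) *
        ((DPer (p + 1) ((n : ℝ) / (c * k₁) + (m : ℝ) / (b * k₂)) : ℝ) : ℂ) := by
    simp only [Finset.mul_sum, ← Finset.sum_add_distrib]
    apply Finset.sum_congr rfl
    intro n hn
    apply Finset.sum_congr rfl
    intro m hm
    rcases Nat.eq_zero_or_pos n with h0 | h0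
    · subst h0
      simp [char_zero χ₁ h₁]
    rcases Nat.eq_zero_or_pos m with h0' | h0'
    · subst h0'
      simp [char_zero χ₂ h₂]
    have hN : (0 : ℝ) < c * k₁ := by positivity
    have hM : (0 : ℝ) < b * k₂ := by positivity
    have e := term_identity p hp ((n : ℝ) / (c * k₁)) ((m : ℝ) / (b * k₂)) (by positivity)
      (by rw [div_lt_one hN]; exact_mod_cast Finset.mem_range.1 hn) (by positivity)
      (by rw [div_lt_one hM]; exact_mod_cast Finset.mem_range.1 hm)
    rw [add_comm ((m : ℝ) / (b * k₂))]
    generalize (n : ℝ) / (c * k₁) = x at *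
    generalize (m : ℝ) / (b * k₂) = y at *
    generalize (∑ j ∈ range (p + 2), ((p + 1).choose j : ℝ) * BPoly j x *
      BPoly (p + 1 - j) y) = S at *
    have e' := congrArg (fun r : ℝ => (r : ℂ)) e
    push_cast at e' ⊢
    linear_combination χ₁ (n : ZMod k₁) * (starRingEnd ℂ) (χ₂ (m : ZMod k₂)) * e'
  have hBF : ∀ x, BFun (p + 1) x = DPer (p + 1) x := BFun_ne_one (p + 1) (by omega)
  simp only [hBF]
  rw [hB]
  rw [mul_pow ((c : ℂ) * k₁)] at hT ⊢
  linear_combination ((p : ℂ) + 1) * ((c : ℂ) * k₁) ^ p * hS1 +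
    ((p : ℂ) + 1) * ((b : ℂ) * k₂) ^ p * hS2 + p * hT +
    ((c : ℂ) * k₁) ^ p * ((b : ℂ) * k₂) ^ p * hfin
end

section
/- Let b, c be positive integers, let p ≥ 1 be an integer, and let χ₁, χ₂ be non-principal primitive Dirichlet characters of the same modulus k. If (−1)^{p+1}·χ₁(−1)·χ₂(−1) = 1, then Σ_{n=1}^{ck−1} χ₁(n)·B̄_{p,χ₂}(bn/c) = 0. -/
open Finset

lemma BPoly_eq_bernoulliFun (n : ℕ) (x : ℝ) : BPoly n x = bernoulliFun n x := rfl

lemma BFun_add_nat (m : ℕ) (x : ℝ) (j : ℕ) : BFun m (x + j) = BFun m x := by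
  unfold BFun
  have h : (∃ i : ℤ, x + (j : ℝ) = (i : ℝ)) ↔ (∃ i : ℤ, x = (i : ℝ)) := by
    constructor
    · rintro ⟨i, hi⟩
      exact ⟨i - j, by push_cast; linarith⟩
    · rintro ⟨i, hi⟩
      exact ⟨i + j, by push_cast; linarith⟩
  simp only [Int.fract_add_natCast, Int.floor_add_natCast]
  by_cases hx : ∃ i : ℤ, x = (i : ℝ)
  · rw [if_pos hx, if_pos (h.mpr hx)]
  · rw [if_neg hx, if_neg (fun hh => hx (h.mp hh))]
    push_cast
    simp only [add_sub_add_right_eq_sub]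

lemma BFun_neg (m : ℕ) (x : ℝ) : BFun m (-x) = (-1) ^ m * BFun m x := by
  unfold BFun
  have h : (∃ i : ℤ, -x = (i : ℝ)) ↔ (∃ i : ℤ, x = (i : ℝ)) := by
    constructor
    · rintro ⟨i, hi⟩
      exact ⟨-i, by push_cast; linarith⟩
    · rintro ⟨i, hi⟩
      exact ⟨-i, by push_cast; linarith⟩
  have hf : ¬ (∃ i : ℤ, x = (i : ℝ)) → Int.fract (-x) = 1 - Int.fract x := by
    intro hx
    apply Int.fract_neg
    intro h0
    exact hx ⟨⌊x⌋, by have := Int.floor_add_fract x; linarith⟩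
  by_cases hm : m = 1
  · subst hm
    simp only [if_true]
    by_cases hx : ∃ i : ℤ, x = (i : ℝ)
    · rw [if_pos hx, if_pos (h.mpr hx), mul_zero]
    · have := hf hx
      simp only [Int.fract] at this
      rw [if_neg hx, if_neg (fun hh => hx (h.mp hh))]
      linarith
  · simp only [hm, if_false, BPoly_eq_bernoulliFun]
    by_cases hx : ∃ i : ℤ, x = (i : ℝ)
    · obtain ⟨i, rfl⟩ := hx
      rw [← Int.cast_neg, Int.fract_intCast, Int.fract_intCast, ← bernoulliFun_eval_one_sub,
        sub_zero, bernoulliFun_endpoints_eq_of_ne_one hm]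
    · rw [hf hx, bernoulliFun_eval_one_sub]

lemma char_neg_one_conj {k : ℕ} (χ : DirichletCharacter ℂ k) :
    (starRingEnd ℂ) (χ (-1)) = χ (-1) := by
  rcases χ.even_or_odd with h | h
  · rw [h]; simp
  · rw [h]; simp

lemma char_sub {k : ℕ} (χ : DirichletCharacter ℂ k) (N n : ℕ) (hn : n ≤ N)
    (hN : (N : ZMod k) = 0) : χ ((N - n : ℕ) : ZMod k) = χ (-1) * χ (n : ZMod k) := by
  rw [Nat.cast_sub hn, hN, zero_sub, ← neg_one_mul, map_mul]

lemma sum_reflect_Icc (N : ℕ) (f : ℕ → ℂ) :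
    ∑ n ∈ Finset.Icc 1 (N - 1), f n = ∑ n ∈ Finset.Icc 1 (N - 1), f (N - n) := by
  apply Finset.sum_nbij' (fun n => N - n) (fun n => N - n)
  · intro a ha; simp only [Finset.mem_Icc] at *; omega
  · intro a ha; simp only [Finset.mem_Icc] at *; omega
  · intro a ha; simp only [Finset.mem_Icc] at *; omega
  · intro a ha; simp only [Finset.mem_Icc] at *; omega
  · intro a ha
    simp only [Finset.mem_Icc] at ha
    congr 1; omega

lemma BFunChar_add {k : ℕ} [NeZero k] (χ : DirichletCharacter ℂ k) (m : ℕ) (x : ℝ) (b : ℕ) :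
    BFunChar χ m (x + b * k) = BFunChar χ m x := by
  unfold BFunChar
  have hk : (k : ℝ) ≠ 0 := Nat.cast_ne_zero.mpr (NeZero.ne k)
  congr 1
  refine Finset.sum_congr rfl fun n _ => ?_
  have : ((n : ℝ) + (x + b * k)) / k = ((n : ℝ) + x) / k + b := by field_simp; ring
  rw [this, BFun_add_nat]

lemma BFunChar_neg {k : ℕ} [NeZero k] (χ : DirichletCharacter ℂ k) (m : ℕ) (x : ℝ) :
    BFunChar χ m (-x) = (-1) ^ m * χ (-1) * BFunChar χ m x := by
  unfold BFunChar
  have hk : (k : ℝ) ≠ 0 := Nat.cast_ne_zero.mpr (NeZero.ne k)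
  rw [mul_left_comm]
  congr 1
  rw [sum_reflect_Icc, Finset.mul_sum]
  refine Finset.sum_congr rfl fun n hn => ?_
  have hnk : n ≤ k := by simp only [Finset.mem_Icc] at hn; omega
  have : (((k - n : ℕ) : ℝ) + -x) / k = -(((n : ℝ) + x) / k) + (1 : ℕ) := by
    rw [Nat.cast_sub hnk]; field_simp; push_cast; ring
  rw [this, BFun_add_nat, BFun_neg, char_sub χ k n hnk (ZMod.natCast_self k), map_mul,
    char_neg_one_conj]
  push_cast
  ring

/-- The sum `Σ_{n=1}^{ck−1} χ₁(n) B̄_{p,χ₂}(bn/c)` vanishes when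
`(−1)^{p+1} χ₁(−1) χ₂(−1) = 1`. -/
theorem sum_char_BFunChar_eq_zero (b c : ℕ) (hb : 0 < b) (hc : 0 < c) (p : ℕ) (hp : 1 ≤ p)
    (k : ℕ) [NeZero k] (χ₁ χ₂ : DirichletCharacter ℂ k)
    (h₁ : χ₁ ≠ 1) (h₂ : χ₂ ≠ 1) (hprim₁ : χ₁.IsPrimitive) (hprim₂ : χ₂.IsPrimitive)
    (hpar : (-1 : ℂ) ^ (p + 1) * χ₁ (-1) * χ₂ (-1) = 1) :
    ∑ n ∈ Finset.Icc 1 (c * k - 1), χ₁ (n : ZMod k) * BFunChar χ₂ p (((b : ℝ) * n) / c) = 0 := by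
  have hc' : (c : ℝ) ≠ 0 := Nat.cast_ne_zero.mpr hc.ne'
  have key : ∑ n ∈ Finset.Icc 1 (c * k - 1),
      χ₁ (n : ZMod k) * BFunChar χ₂ p (((b : ℝ) * n) / c) =
      - ∑ n ∈ Finset.Icc 1 (c * k - 1),
        χ₁ (n : ZMod k) * BFunChar χ₂ p (((b : ℝ) * n) / c) := by
    conv_lhs => rw [sum_reflect_Icc]
    rw [← Finset.sum_neg_distrib]
    refine Finset.sum_congr rfl fun n hn => ?_
    have hnk : n ≤ c * k := by simp only [Finset.mem_Icc] at hn; omega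
    have : (b : ℝ) * ((c * k - n : ℕ) : ℝ) / c = -((b : ℝ) * n / c) + b * k := by
      rw [Nat.cast_sub hnk]; push_cast; field_simp; ring
    rw [this, BFunChar_add, BFunChar_neg, char_sub χ₁ (c * k) n hnk (by simp)]
    rw [pow_succ] at hpar
    linear_combination (-(χ₁ (n : ZMod k) * BFunChar χ₂ p (((b : ℝ) * n) / c))) * hpar
  exact self_eq_neg.mp key
end

section
/- Let b, c be positive integers, let p > 1 be an integer, let l be an integer with 0 ≤ l ≤ p−1, and let χ₁, χ₂ be non-principal primitive Dirichlet characters of the same modulus k satisfying (−1)^{p+1}·χ₁(−1)·χ₂(−1) = −1. Then ∫_0^k B̄_{l+1,χ̄₁}(cx)·B̄_{p−l,χ₂}(bx) dx = 0. -/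
open Finset

theorem BPoly_one_sub (m : ℕ) (x : ℝ) : BPoly m (1 - x) = (-1) ^ m * BPoly m x := by
  have h := congrArg (fun P : Polynomial ℚ => Polynomial.eval x (P.map (algebraMap ℚ ℝ)))
    (Polynomial.bernoulli_comp_one_sub_X m)
  simpa [BPoly, Polynomial.map_comp] using h

theorem BPoly_zero_parity (m : ℕ) (hm : m ≠ 1) : BPoly m 0 = (-1) ^ m * BPoly m 0 := by
  rcases Nat.even_or_odd m with h | h
  · simp [h.neg_one_pow]
  · have h0 : BPoly m 0 = 0 := by
      have h1 : 1 < m := by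
        have := h.pos
        omega
      have h2 : (Polynomial.bernoulli m).eval 0 = 0 := by
        rw [Polynomial.bernoulli_eval_zero, bernoulli_eq_zero_of_odd h h1]
      have h3 := Polynomial.eval_map_algebraMap (B := ℝ) (Polynomial.bernoulli m) (algebraMap ℚ ℝ 0)
      rw [Polynomial.aeval_algebraMap_apply, Polynomial.coe_aeval_eq_eval, h2] at h3
      simpa [BPoly] using h3
    simp [h0]

theorem BFun_sub (m : ℕ) (j : ℤ) (y : ℝ) : BFun m (j - y) = (-1) ^ m * BFun m y := by
  by_cases hy : ∃ z : ℤ, y = (z : ℝ)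
  · obtain ⟨z, rfl⟩ := hy
    have e : (j : ℝ) - z = ((j - z : ℤ) : ℝ) := by push_cast; ring
    rw [e]
    unfold BFun
    by_cases hm : m = 1
    · have h1 : ∃ w : ℤ, ((j - z : ℤ) : ℝ) = (w : ℝ) := ⟨_, rfl⟩
      have h2 : ∃ w : ℤ, (z : ℝ) = (w : ℝ) := ⟨_, rfl⟩
      rw [if_pos hm, if_pos hm, if_pos h1, if_pos h2, mul_zero]
    · rw [if_neg hm, if_neg hm, Int.fract_intCast, Int.fract_intCast]
      exact BPoly_zero_parity m hm
  · have hy' : ¬ ∃ z : ℤ, (j : ℝ) - y = (z : ℝ) := by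
      rintro ⟨z, hz⟩
      exact hy ⟨j - z, by push_cast; linarith⟩
    have hf : Int.fract y ≠ 0 := fun h => hy ⟨⌊y⌋, by
      have := Int.floor_add_fract y
      linarith⟩
    have e : Int.fract ((j : ℝ) - y) = 1 - Int.fract y := by
      rw [sub_eq_add_neg, Int.fract_intCast_add, Int.fract_neg hf]
    unfold BFun
    by_cases hm : m = 1
    · rw [if_pos hm, if_pos hm, if_neg hy, if_neg hy', Int.self_sub_floor, Int.self_sub_floor, e, hm]
      ring
    · rw [if_neg hm, if_neg hm, e, BPoly_one_sub]

theorem BFunChar_sub {k : ℕ} [NeZero k] (χ : DirichletCharacter ℂ k) (m : ℕ) (j : ℕ) (x : ℝ) :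
    BFunChar χ m (j * k - x) = (-1) ^ m * χ (-1) * BFunChar χ m x := by
  have hk : (k : ℝ) ≠ 0 := Nat.cast_ne_zero.mpr (NeZero.ne k)
  have hc : (starRingEnd ℂ) (χ (-1)) = χ (-1) := by
    rcases χ.even_or_odd with h | h
    · rw [show χ (-1) = 1 from h]; simp
    · rw [show χ (-1) = -1 from h]; simp
  unfold BFunChar
  rw [mul_left_comm, Finset.mul_sum _ _ ((-1) ^ m * χ (-1))]
  congr 1
  refine Finset.sum_bij' (fun n _ => k - n) (fun n _ => k - n) ?_ ?_ ?_ ?_ ?_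
  · intro n hn; simp only [Finset.mem_Icc] at *; omega
  · intro n hn; simp only [Finset.mem_Icc] at *; omega
  · intro n hn; simp only [Finset.mem_Icc] at *; omega
  · intro n hn; simp only [Finset.mem_Icc] at *; omega
  · intro n hn
    simp only [Finset.mem_Icc] at hn
    have hle : n ≤ k := by omega
    have e1 : (((k - n : ℕ)) : ZMod k) = (-1) * (n : ZMod k) := by
      rw [Nat.cast_sub hle]; simp
    have e2 : ((n : ℝ) + (j * k - x)) / k
        = ((j + 1 : ℤ) : ℝ) - (((k - n : ℕ) : ℝ) + x) / k := by
      rw [Nat.cast_sub hle]; push_cast; field_simp; ring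
    have e3 : χ (-1) * χ (-1) = 1 := by rw [← map_mul]; simp
    rw [e1, e2, BFun_sub, map_mul, map_mul, hc]
    push_cast
    linear_combination (-((-1 : ℂ) ^ m * (starRingEnd ℂ) (χ (n : ZMod k)) *
      (BFun m ((((k - n : ℕ) : ℝ) + x) / k) : ℂ))) * e3

/-- Vanishing of the integral of a product of two generalized Bernoulli functions when
`(−1)^{p+1} χ₁(−1) χ₂(−1) = −1`. -/
theorem integral_BFunChar_mul_BFunChar_eq_zero (b c : ℕ) (hb : 0 < b) (hc : 0 < c)
    (p : ℕ) (hp : 1 < p) (l : ℕ) (hl : l ≤ p - 1)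
    (k : ℕ) [NeZero k] (χ₁ χ₂ : DirichletCharacter ℂ k)
    (h₁ : χ₁ ≠ 1) (h₂ : χ₂ ≠ 1) (hprim₁ : χ₁.IsPrimitive) (hprim₂ : χ₂.IsPrimitive)
    (hpar : (-1 : ℂ) ^ (p + 1) * χ₁ (-1) * χ₂ (-1) = -1) :
    ∫ x in (0 : ℝ)..(k : ℝ),
        BFunChar (conjChar χ₁) (l + 1) ((c : ℝ) * x) * BFunChar χ₂ (p - l) ((b : ℝ) * x) = 0 := by
  set F : ℝ → ℂ := fun x =>
    BFunChar (conjChar χ₁) (l + 1) ((c : ℝ) * x) * BFunChar χ₂ (p - l) ((b : ℝ) * x) with hF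
  have hconj : conjChar χ₁ (-1) = χ₁ (-1) := by
    have e : conjChar χ₁ (-1) = (starRingEnd ℂ) (χ₁ (-1)) := rfl
    rw [e]
    rcases χ₁.even_or_odd with h | h
    · rw [show χ₁ (-1) = 1 from h]; simp
    · rw [show χ₁ (-1) = -1 from h]; simp
  have hodd : ∀ x, F ((k : ℝ) - x) = - F x := by
    intro x
    simp only [hF]
    rw [mul_sub, mul_sub, BFunChar_sub, BFunChar_sub, hconj]
    have hpow : (-1 : ℂ) ^ (p + 1) = (-1) ^ (l + 1) * (-1) ^ (p - l) := by
      rw [← pow_add]; congr 1; omega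
    rw [hpow] at hpar
    linear_combination (BFunChar (conjChar χ₁) (l + 1) ((c : ℝ) * x) *
      BFunChar χ₂ (p - l) ((b : ℝ) * x)) * hpar
  have h := intervalIntegral.integral_comp_sub_left (a := 0) (b := (k : ℝ)) F (k : ℝ)
  simp only [hodd, sub_self, sub_zero, intervalIntegral.integral_neg] at h
  exact self_eq_neg.mp h.symm
end
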